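/- Let L ⊆ ℤ^m be a nonzero positive lattice. Let C be the set of all E ⊆ {1,…,m} such that E = supp(u⁺) or E = supp(u⁻) for some circuit u of Sat(L), and let C_min be the set of minimal elements of C with respect to inclusion. Then T_min = C_min. -/

import Mathlib

open MvPolynomial

variable (K : Type*) [Field K]

/-- The monomial `x^w`. -/
noncomputable def mono {m : ℕ} (w : Fin m → ℕ) : MvPolynomial (Fin m) K :=
  ∏ i, X i ^ w i

/-- The positive part `u⁺` of an integer vector. -/
def intPos {m : ℕ} (u : Fin m → ℤ) : Fin m → ℕ := fun i => (u i).toNat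

/-- The negative part `u⁻` of an integer vector. -/
def intNeg {m : ℕ} (u : Fin m → ℤ) : Fin m → ℕ := fun i => (-u i).toNat

/-- Support of a vector of naturals. -/
def suppN {m : ℕ} (w : Fin m → ℕ) : Set (Fin m) := {i | w i ≠ 0}

/-- Support of a vector of integers. -/
def suppZ {m : ℕ} (u : Fin m → ℤ) : Set (Fin m) := {i | u i ≠ 0}

/-- The lattice ideal `I_L`. -/
noncomputable def latticeIdeal {m : ℕ} (L : AddSubgroup (Fin m → ℤ)) :
    Ideal (MvPolynomial (Fin m) K) :=
  Ideal.span {f | ∃ u ∈ L, f = mono K (intPos u) - mono K (intNeg u)}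

/-- A binomial: a difference of two monomials. -/
def IsBinomial {m : ℕ} (f : MvPolynomial (Fin m) K) : Prop :=
  ∃ u v : Fin m → ℕ, f = mono K u - mono K v

/-- `x^w` is an indispensable monomial of `I_L`: every binomial generating set of `I_L`
contains a binomial one of whose monomials is `x^w`. -/
def IsIndispMonomial {m : ℕ} (L : AddSubgroup (Fin m → ℤ)) (w : Fin m → ℕ) : Prop :=
  ∀ B : Set (MvPolynomial (Fin m) K), (∀ f ∈ B, IsBinomial K f) →
    Ideal.span B = latticeIdeal K L →
    ∃ f ∈ B, ∃ v : Fin m → ℕ, f = mono K w - mono K v ∨ f = mono K v - mono K w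

/-- The set `T` of supports of indispensable monomials of `I_L`. -/
def Tsupp {m : ℕ} (L : AddSubgroup (Fin m → ℤ)) : Set (Set (Fin m)) :=
  {E | ∃ w : Fin m → ℕ, IsIndispMonomial K L w ∧ E = suppN w}

/-- `T_min`, the set of minimal elements of `T` with respect to inclusion. -/
def Tmin {m : ℕ} (L : AddSubgroup (Fin m → ℤ)) : Set (Set (Fin m)) :=
  {E ∈ Tsupp K L | ∀ E' ∈ Tsupp K L, E' ⊆ E → E' = E}

/-- The saturation `Sat(L)` of the lattice `L`. -/
def satL {m : ℕ} (L : AddSubgroup (Fin m → ℤ)) : Set (Fin m → ℤ) :=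
  {u | ∃ d : ℤ, d ≠ 0 ∧ d • u ∈ L}

/-- A circuit of `Sat(L)`: a nonzero element of `Sat(L)` of minimal support
whose coordinates are relatively prime. -/
def IsCircuit {m : ℕ} (L : AddSubgroup (Fin m → ℤ)) (u : Fin m → ℤ) : Prop :=
  u ≠ 0 ∧ u ∈ satL L ∧
    (∀ v ∈ satL L, v ≠ 0 → suppZ v ⊆ suppZ u → suppZ v = suppZ u) ∧
    Finset.univ.gcd (fun i => (u i).natAbs) = 1

/-- The set `C` of supports of positive or negative parts of circuits of `Sat(L)`. -/
def Csupp {m : ℕ} (L : AddSubgroup (Fin m → ℤ)) : Set (Set (Fin m)) :=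
  {E | ∃ u : Fin m → ℤ, IsCircuit L u ∧
    (E = suppN (intPos u) ∨ E = suppN (intNeg u))}

/-- `C_min`, the set of minimal elements of `C` with respect to inclusion. -/
def Cmin {m : ℕ} (L : AddSubgroup (Fin m → ℤ)) : Set (Set (Fin m)) :=
  {E ∈ Csupp L | ∀ E' ∈ Csupp L, E' ⊆ E → E' = E}

theorem mono_eq {m : ℕ} (w : Fin m → ℕ) :
    mono K w = monomial (Finsupp.equivFunOnFinite.symm w) 1 := by
  unfold mono
  rw [MvPolynomial.monomial_eq, C_1, one_mul, Finsupp.prod_fintype _ _ (fun i => by simp)]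
  rfl

/-- The natural map to the group algebra of `ℤ^m / L`. -/
noncomputable def toQuot {m : ℕ} (L : AddSubgroup (Fin m → ℤ)) :
    MvPolynomial (Fin m) K →ₐ[K] AddMonoidAlgebra K ((Fin m → ℤ) ⧸ L) :=
  aeval (fun i => AddMonoidAlgebra.single
    (QuotientAddGroup.mk (Pi.single i 1 : Fin m → ℤ) : (Fin m → ℤ) ⧸ L) (1 : K))

theorem prod_single_aux {m : ℕ} {G : Type*} [AddCommGroup G] (g : Fin m → G)
    (s : Finset (Fin m)) :
    ∏ i ∈ s, AddMonoidAlgebra.single (g i) (1 : K) =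
      AddMonoidAlgebra.single (∑ i ∈ s, g i) (1 : K) := by
  induction s using Finset.induction_on with
  | empty => simp [AddMonoidAlgebra.one_def]
  | insert a s ha ih =>
    rw [Finset.prod_insert ha, Finset.sum_insert ha, ih, AddMonoidAlgebra.single_mul_single,
      one_mul]

theorem toQuot_mono {m : ℕ} (L : AddSubgroup (Fin m → ℤ)) (w : Fin m → ℕ) :
    toQuot K L (mono K w) = AddMonoidAlgebra.single
      (QuotientAddGroup.mk (fun i => (w i : ℤ)) : (Fin m → ℤ) ⧸ L) (1 : K) := by
  unfold mono toQuot
  simp only [map_prod, map_pow, aeval_X, AddMonoidAlgebra.single_pow, one_pow]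
  rw [prod_single_aux]
  congr 1
  have : (fun i => (w i : ℤ)) = ∑ i, w i • (Pi.single i 1 : Fin m → ℤ) := by
    funext j
    simp [Finset.sum_apply, Pi.single_apply]
  rw [this]
  change _ = QuotientAddGroup.mk' L _
  rw [map_sum]
  rfl

theorem mem_of_binomial_mem {m : ℕ} (L : AddSubgroup (Fin m → ℤ)) (p q : Fin m → ℕ)
    (h : mono K p - mono K q ∈ latticeIdeal K L) :
    (fun i => (p i : ℤ) - (q i : ℤ)) ∈ L := by
  have hle : latticeIdeal K L ≤ RingHom.ker (toQuot K L) := by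
    unfold latticeIdeal
    rw [Ideal.span_le]
    rintro f ⟨u, hu, rfl⟩
    rw [SetLike.mem_coe, RingHom.mem_ker, map_sub, toQuot_mono, toQuot_mono, sub_eq_zero]
    congr 1
    rw [QuotientAddGroup.eq]
    have : -(fun i => (intPos u i : ℤ)) + (fun i => (intNeg u i : ℤ)) = -u := by
      funext i
      simp only [Pi.add_apply, Pi.neg_apply, intPos, intNeg]
      omega
    rw [this]
    exact L.neg_mem hu
  have h2 := hle h
  rw [RingHom.mem_ker, map_sub, toQuot_mono, toQuot_mono, sub_eq_zero] at h2
  have h3 := AddMonoidAlgebra.single_left_injective (one_ne_zero) h2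
  rw [eq_comm, QuotientAddGroup.eq] at h3
  convert h3 using 1
  funext i
  simp only [Pi.add_apply, Pi.neg_apply]
  ring

theorem binomial_mem {m : ℕ} (L : AddSubgroup (Fin m → ℤ)) (p q : Fin m → ℕ)
    (h : (fun i => (p i : ℤ) - (q i : ℤ)) ∈ L) :
    mono K p - mono K q ∈ latticeIdeal K L := by
  set u : Fin m → ℤ := fun i => (p i : ℤ) - (q i : ℤ) with hu
  have hp : mono K p = mono K (fun i => min (p i) (q i)) * mono K (intPos u) := by
    unfold mono
    rw [← Finset.prod_mul_distrib]
    refine Finset.prod_congr rfl fun i _ => ?_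
    rw [← pow_add]
    congr 1
    simp only [intPos, hu]
    omega
  have hq : mono K q = mono K (fun i => min (p i) (q i)) * mono K (intNeg u) := by
    unfold mono
    rw [← Finset.prod_mul_distrib]
    refine Finset.prod_congr rfl fun i _ => ?_
    rw [← pow_add]
    congr 1
    simp only [intNeg, hu]
    omega
  rw [hp, hq, ← mul_sub]
  exact Ideal.mul_mem_left _ _ (Ideal.subset_span ⟨u, h, rfl⟩)

/-- Exponents of monomials occurring in nonzero binomials of `I_L`. -/
def SL {m : ℕ} (L : AddSubgroup (Fin m → ℤ)) (w : Fin m → ℕ) : Prop :=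
  ∃ v : Fin m → ℕ, v ≠ w ∧ (fun i => (w i : ℤ) - (v i : ℤ)) ∈ L

theorem SL_of_indisp {m : ℕ} (L : AddSubgroup (Fin m → ℤ)) (w : Fin m → ℕ)
    (h : IsIndispMonomial K L w) : SL L w := by
  let B : Set (MvPolynomial (Fin m) K) :=
    {f | f ≠ 0 ∧ ∃ u ∈ L, f = mono K (intPos u) - mono K (intNeg u)}
  have hB : Ideal.span B = latticeIdeal K L := by
    apply le_antisymm
    · exact Ideal.span_mono fun f hf => hf.2
    · unfold latticeIdeal
      rw [Ideal.span_le]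
      intro f hf
      by_cases h0 : f = 0
      · rw [h0]; exact Ideal.zero_mem _
      · exact Ideal.subset_span ⟨h0, hf⟩
  obtain ⟨f, hf, v, hv⟩ := h B (fun f hf => by
    obtain ⟨_, u, _, rfl⟩ := hf
    exact ⟨_, _, rfl⟩) hB
  have hfI : f ∈ latticeIdeal K L := hB ▸ Ideal.subset_span hf
  have hf0 := hf.1
  refine ⟨v, ?_, ?_⟩
  · rintro rfl
    rcases hv with hv | hv <;> simp [hv] at hf0
  · apply mem_of_binomial_mem K
    rcases hv with rfl | rfl
    · exact hfI
    · rw [← neg_sub]; exact neg_mem hfI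

theorem indisp_of_minimal {m : ℕ} (L : AddSubgroup (Fin m → ℤ)) (w : Fin m → ℕ)
    (h : Minimal (SL L) w) : IsIndispMonomial K L w := by
  classical
  intro B hBb hB
  by_contra hcon
  push Not at hcon
  have key : ∀ g ∈ Ideal.span B, ∀ r : Fin m →₀ ℕ, (⇑r ≤ w) → coeff r g = 0 := by
    intro g hg
    refine Submodule.span_induction ?_ ?_ ?_ ?_ hg
    · intro f hf r hr
      obtain ⟨p, q, rfl⟩ := hBb f hf
      have hI : mono K p - mono K q ∈ latticeIdeal K L := hB ▸ Ideal.subset_span hf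
      have hpq := mem_of_binomial_mem K L p q hI
      by_cases e : p = q
      · simp [e]
      have hp : SL L p := ⟨q, fun h => e h.symm, hpq⟩
      have hq : SL L q := ⟨p, e, by
        have := L.neg_mem hpq
        convert this using 1
        funext i
        simp⟩
      rw [coeff_sub, mono_eq, mono_eq, coeff_monomial, coeff_monomial]
      have h1 : ¬ (Finsupp.equivFunOnFinite.symm p = r) := by
        rintro rfl
        have hle : p ≤ w := hr
        have : p = w := le_antisymm hle (h.2 hp hle)
        subst this
        exact (hcon _ hf q).1 rfl
      have h2 : ¬ (Finsupp.equivFunOnFinite.symm q = r) := by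
        rintro rfl
        have hle : q ≤ w := hr
        have : q = w := le_antisymm hle (h.2 hq hle)
        subst this
        exact (hcon _ hf p).2 rfl
      rw [if_neg h1, if_neg h2, sub_zero]
    · intro r _; simp
    · intro x y _ _ hx hy r hr
      rw [coeff_add, hx r hr, hy r hr, add_zero]
    · intro a x _ hx r hr
      rw [smul_eq_mul, coeff_mul]
      refine Finset.sum_eq_zero fun ij hij => ?_
      rw [Finset.HasAntidiagonal.mem_antidiagonal] at hij
      rw [hx ij.2 (fun i => le_trans (by rw [← hij]; simp) (hr i)), mul_zero]
  obtain ⟨v, hv, hvL⟩ := h.1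
  have h1 := key (mono K w - mono K v) (hB ▸ binomial_mem K L w v hvL)
    (Finsupp.equivFunOnFinite.symm w) le_rfl
  rw [coeff_sub, mono_eq, mono_eq, coeff_monomial, coeff_monomial, if_pos rfl, if_neg] at h1
  · simp at h1
  · intro e
    exact hv (Finsupp.equivFunOnFinite.symm.injective e)

theorem satL_comb {m : ℕ} (L : AddSubgroup (Fin m → ℤ)) {u v : Fin m → ℤ}
    (hu : u ∈ satL L) (hv : v ∈ satL L) (a b : ℤ) : a • u - b • v ∈ satL L := by
  obtain ⟨d, hd, hdu⟩ := hu
  obtain ⟨e, he, hev⟩ := hv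
  refine ⟨d * e, mul_ne_zero hd he, ?_⟩
  have : (d * e) • (a • u - b • v) = (e * a) • (d • u) - (d * b) • (e • v) := by
    funext i
    simp only [Pi.smul_apply, Pi.sub_apply, smul_eq_mul]
    ring
  rw [this]
  exact L.sub_mem (L.zsmul_mem hdu _) (L.zsmul_mem hev _)

theorem satL_neg {m : ℕ} (L : AddSubgroup (Fin m → ℤ)) {u : Fin m → ℤ}
    (hu : u ∈ satL L) : -u ∈ satL L := by
  have := satL_comb L hu hu 0 1
  simpa using this

/-- One elimination step, with a common positive coordinate product. -/
theorem step_aux {m : ℕ} (L : AddSubgroup (Fin m → ℤ)) {u v : Fin m → ℤ}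
    (hu : u ∈ satL L) (hv : v ∈ satL L) (hsub : suppZ v ⊆ suppZ u)
    (hne : suppZ v ≠ suppZ u) (hpos : ∃ i, 0 < u i * v i) :
    ∃ u' ∈ satL L, u' ≠ 0 ∧ suppZ u' ⊂ suppZ u ∧ (∀ i, 0 < u' i → 0 < u i) := by
  classical
  have hne' : ∃ j, u j ≠ 0 ∧ v j = 0 := by
    by_contra hc
    push Not at hc
    exact hne (Set.Subset.antisymm hsub fun j hj => hc j hj)
  obtain ⟨j, huj, hvj⟩ := hne'
  obtain ⟨i0, hi0⟩ := hpos
  obtain ⟨i, hi, hmin⟩ := Finset.exists_min_image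
    (Finset.univ.filter fun i => 0 < u i * v i) (fun i => ((u i : ℚ) / (v i : ℚ)))
    ⟨i0, by simpa using hi0⟩
  simp only [Finset.mem_filter, Finset.mem_univ, true_and] at hi hmin
  have hvi : v i ≠ 0 := by rintro h; simp [h] at hi
  have hui : u i ≠ 0 := by rintro h; simp [h] at hi
  have hsame : |v i| * u i - |u i| * v i = 0 := by
    rcases lt_or_gt_of_ne hvi with h | h
    · have : u i < 0 := by nlinarith
      rw [abs_of_neg h, abs_of_neg this]; ring
    · have : 0 < u i := by nlinarith
      rw [abs_of_pos h, abs_of_pos this]; ring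
  have hz : ∀ k, u k = 0 → v k = 0 := by
    intro k hk
    by_contra hc
    exact hsub hc hk
  have hvp : 0 < |v i| := abs_pos.mpr hvi
  have hup : 0 < |u i| := abs_pos.mpr hui
  refine ⟨|v i| • u - |u i| • v, satL_comb L hu hv _ _, ?_, ?_, ?_⟩
  · intro h
    have := congrFun h j
    simp [hvj, hvi, huj] at this
  · refine ⟨?_, ?_⟩
    · intro k hk hk0
      apply hk
      simp [hk0, hz k hk0]
    · intro h
      exact h (show i ∈ suppZ u from hui) (by simpa using hsame)
  · intro k hk
    simp only [Pi.sub_apply, Pi.smul_apply, smul_eq_mul] at hk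
    by_contra hc
    rcases eq_or_lt_of_le (not_lt.mp hc) with h0 | hneg
    · rw [h0, hz k h0] at hk; simp at hk
    · have hvk : v k < 0 := by nlinarith [mul_pos hvp (neg_pos.mpr hneg)]
      have hq := hmin k (mul_pos_of_neg_of_neg hneg hvk)
      have hvkq : (v k : ℚ) < 0 := by exact_mod_cast hvk
      rw [le_div_iff_of_neg hvkq] at hq
      have hrat : ((u i : ℚ) / v i) * |(v i : ℚ)| = |(u i : ℚ)| := by
        have hviq : (v i : ℚ) ≠ 0 := by exact_mod_cast hvi
        have : (0 : ℚ) < u i / v i := by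
          have : (0 : ℚ) < u i * v i := by exact_mod_cast hi
          have h2 : (u i : ℚ) / v i = (u i * v i) / (v i) ^ 2 := by field_simp
          rw [h2]; positivity
        nth_rewrite 1 [← abs_of_pos this]
        rw [← abs_mul]
        congr 1
        field_simp
      have hkq : (0 : ℚ) < |(v i : ℚ)| * u k - |(u i : ℚ)| * v k := by exact_mod_cast hk
      have hvpq : (0 : ℚ) < |(v i : ℚ)| := by exact_mod_cast hvp
      have := mul_le_mul_of_nonneg_left hq hvpq.le
      rw [← hrat] at hkq
      nlinarith

theorem step {m : ℕ} (L : AddSubgroup (Fin m → ℤ)) {u v : Fin m → ℤ}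
    (hu : u ∈ satL L) (hv : v ∈ satL L) (hv0 : v ≠ 0) (hsub : suppZ v ⊆ suppZ u)
    (hne : suppZ v ≠ suppZ u) :
    ∃ u' ∈ satL L, u' ≠ 0 ∧ suppZ u' ⊂ suppZ u ∧ (∀ i, 0 < u' i → 0 < u i) := by
  obtain ⟨i, hi⟩ := Function.ne_iff.mp hv0
  have hui : u i ≠ 0 := hsub hi
  have hi' : v i ≠ 0 := hi
  have hs : suppZ (-v) = suppZ v := by ext k; simp [suppZ]
  rcases lt_or_gt_of_ne (mul_ne_zero hui hi') with h | h
  · exact step_aux L hu (satL_neg L hv) (hs ▸ hsub) (hs ▸ hne) ⟨i, by simpa using h⟩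
  · exact step_aux L hu hv hsub hne ⟨i, h⟩

theorem exists_circuit {m : ℕ} (L : AddSubgroup (Fin m → ℤ)) (u : Fin m → ℤ)
    (hu : u ∈ satL L) (hu0 : u ≠ 0) :
    ∃ c, IsCircuit L c ∧ ∀ i, 0 < c i → 0 < u i := by
  induction hn : (suppZ u).ncard using Nat.strong_induction_on generalizing u with
  | _ n ih =>
  by_cases hmin : ∀ v ∈ satL L, v ≠ 0 → suppZ v ⊆ suppZ u → suppZ v = suppZ u
  · set g := Finset.univ.gcd (fun i => (u i).natAbs) with hg
    have hdvd : ∀ i, (g : ℤ) ∣ u i := fun i =>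
      Int.natCast_dvd.mpr (Finset.gcd_dvd (Finset.mem_univ i))
    choose c hc using hdvd
    obtain ⟨i, hi⟩ := Function.ne_iff.mp hu0
    have hg0 : 0 < g := by
      rcases Nat.eq_zero_or_pos g with h | h
      · exact absurd (by rw [hc i, h]; simp) hi
      · exact h
    have hgz : (0 : ℤ) < g := by exact_mod_cast hg0
    have hgu : u = (g : ℤ) • c := by funext k; simpa using hc k
    have hs : suppZ c = suppZ u := by
      ext k
      simp [suppZ, hc k, hg0.ne']
    refine ⟨c, ⟨?_, ?_, ?_, ?_⟩, ?_⟩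
    · rintro rfl
      simp at hgu
      exact hu0 hgu
    · obtain ⟨d, hd, hdu⟩ := hu
      refine ⟨d * g, mul_ne_zero hd hgz.ne', ?_⟩
      rw [mul_smul, ← hgu]
      exact hdu
    · rw [hs]; exact hmin
    · have h1 : g = g * Finset.univ.gcd (fun i => (c i).natAbs) := by
        conv_lhs => rw [hg]
        have : (fun i => (u i).natAbs) = fun i => g * (c i).natAbs := by
          funext k
          rw [hc k, Int.natAbs_mul, Int.natAbs_natCast]
        rw [this, Finset.gcd_mul_left]
        simp
      exact (Nat.eq_of_mul_eq_mul_left hg0 (by rw [mul_one]; exact h1)).symm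
    · intro k hk
      rw [hc k]
      positivity
  · push Not at hmin
    obtain ⟨v, hv, hv0, hsub, hne⟩ := hmin
    obtain ⟨u', hu', hun, hss, hp⟩ := step L hu hv hv0 hsub hne
    obtain ⟨c, hcc, hcp⟩ := ih _ (hn ▸ Set.ncard_lt_ncard hss (Set.toFinite _)) u' hu' hun rfl
    exact ⟨c, hcc, fun i hi => hp i (hcp i hi)⟩

theorem C_below_T {m : ℕ} (L : AddSubgroup (Fin m → ℤ)) :
    ∀ E ∈ Tsupp K L, ∃ E' ∈ Csupp L, E' ⊆ E := by
  rintro E ⟨w, hw, rfl⟩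
  obtain ⟨v, hv, hL⟩ := SL_of_indisp K L w hw
  obtain ⟨c, hc, hcp⟩ := exists_circuit L _ (⟨1, one_ne_zero, by simpa using hL⟩ :
    (fun i => (w i : ℤ) - (v i : ℤ)) ∈ satL L) (by
      intro h
      apply hv
      funext i
      have := congrFun h i
      simp only [Pi.zero_apply] at this
      omega)
  refine ⟨_, ⟨c, hc, Or.inl rfl⟩, ?_⟩
  intro i hi
  have hi' : (c i).toNat ≠ 0 := hi
  have := hcp i (by omega)
  change w i ≠ 0
  omega

theorem T_below_aux {m : ℕ} (L : AddSubgroup (Fin m → ℤ)) (u : Fin m → ℤ)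
    (hu : u ∈ satL L) (hu0 : u ≠ 0) : ∃ E' ∈ Tsupp K L, E' ⊆ suppN (intPos u) := by
  obtain ⟨d, hd, hdu⟩ := hu
  have hdu' : |d| • u ∈ L := by
    rcases abs_choice d with h | h
    · rw [h]; exact hdu
    · rw [h, neg_smul]; exact L.neg_mem hdu
  have hdp : 0 < |d| := abs_pos.mpr hd
  have hS : SL L (intPos (|d| • u)) := by
    refine ⟨intNeg (|d| • u), ?_, ?_⟩
    · intro h
      apply hu0
      funext i
      have h1 := congrFun h i
      simp only [intNeg, intPos] at h1
      have h2 : (|d| • u) i = 0 := by omega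
      simpa [hd] using h2
    · convert hdu' using 1
      funext i
      simp only [intNeg, intPos]
      omega
  obtain ⟨w, hwle, hw⟩ := exists_minimal_le_of_wellFoundedLT (SL L) _ hS
  refine ⟨_, ⟨w, indisp_of_minimal K L w hw, rfl⟩, ?_⟩
  intro i hi
  have h1 : w i ≠ 0 := hi
  have h2 : w i ≤ (|d| * u i).toNat := hwle i
  have h3 : 0 < |d| * u i := by omega
  have h4 : 0 < u i := pos_of_mul_pos_right h3 hdp.le
  change (u i).toNat ≠ 0
  omega

theorem T_below_C {m : ℕ} (L : AddSubgroup (Fin m → ℤ)) :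
    ∀ E ∈ Csupp L, ∃ E' ∈ Tsupp K L, E' ⊆ E := by
  rintro E ⟨u, hu, rfl | rfl⟩
  · exact T_below_aux K L u hu.2.1 hu.1
  · exact T_below_aux K L (-u) (satL_neg L hu.2.1) (neg_ne_zero.mpr hu.1)

theorem min_sub_min {α : Type*} (A B : Set (Set α)) (hAB : ∀ a ∈ A, ∃ b ∈ B, b ⊆ a)
    (hBA : ∀ b ∈ B, ∃ a ∈ A, a ⊆ b) :
    {E ∈ A | ∀ E' ∈ A, E' ⊆ E → E' = E} ⊆ {E ∈ B | ∀ E' ∈ B, E' ⊆ E → E' = E} := by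
  rintro E ⟨hE, hmin⟩
  have h : ∀ b ∈ B, b ⊆ E → b = E := by
    intro b hb hbE
    obtain ⟨a, ha, hab⟩ := hBA b hb
    have := hmin a ha (hab.trans hbE)
    exact Set.Subset.antisymm hbE (this ▸ hab)
  obtain ⟨b, hb, hbE⟩ := hAB E hE
  exact ⟨h b hb hbE ▸ hb, h⟩

theorem stmt1 {m : ℕ} (L : AddSubgroup (Fin m → ℤ))
    (hL0 : L ≠ ⊥) (hLpos : ∀ u ∈ L, (∀ i, 0 ≤ u i) → u = 0) :
    Tmin K L = Cmin L := by
  exact Set.Subset.antisymm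
    (min_sub_min _ _ (C_below_T K L) (T_below_C K L))
    (min_sub_min _ _ (T_below_C K L) (C_below_T K L))
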